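/- The following formulas are well defined and endow the free rank-one U_q^-(g)-modules U_q^-(g)φ'_λ and U_q^-(g)φ''_λ with structures of B_θ(g)-modules: on U_q^-(g)φ'_λ, T_i(aφ'_λ)=q^{(α_i,λ)}(Ad(t_it_{θ(i)})a)φ'_λ, E_i(aφ'_λ)=(e_i'a+q^{(α_i,λ)}Ad(t_i)(e^*_{θ(i)}a))φ'_λ, F_i(aφ'_λ)=(f_ia)φ'_λ; on U_q^-(g)φ''_λ, T_i(aφ''_λ)=q^{(α_i,λ)}(Ad(t_it_{θ(i)})a)φ''_λ, E_i(aφ''_λ)=(e_i'a)φ''_λ, F_i(aφ''_λ)=(f_ia+q^{(α_i,λ)}(Ad(t_i)a)f_{θ(i)})φ''_λ. Moreover there exists a unique B_θ(g)-linear map ψ: U_q^-(g)φ'_λ → U_q^-(g)φ''_λ with ψ(φ'_λ)=φ''_λ. -/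

import Mathlib

noncomputable section
open scoped BigOperators TensorProduct

abbrev KK : Type := RatFunc ℚ

def qq : KK := RatFunc.X

def qZ (n : ℤ) : KK := qq ^ n

def qInt (d : ℤ) (k : ℕ) : KK := (qq ^ (d * k) - qq ^ (-(d * k : ℤ))) / (qq ^ d - qq ^ (-d : ℤ))

def qFact (d : ℤ) (k : ℕ) : KK := ∏ m ∈ Finset.range k, qInt d (m + 1)

variable {I : Type} [DecidableEq I]

/-- `b = 1 - (α_i^∨, α_j)` -/
def serreN (A : I → I → ℤ) (i j : I) : ℕ := (1 - 2 * A i j / A i i).toNat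

/-- the `q`-Serre element `Σ_k (-1)^k x_i^{(k)} x_j x_i^{(b-k)}` attached to a family
`x : I → R` of elements of a `K`-algebra `R`. -/
def serreElt (A : I → I → ℤ) {R : Type} [Ring R] [Algebra KK R] (x : I → R) (i j : I) : R :=
  ∑ k ∈ Finset.range (serreN A i j + 1),
    ((-1 : KK) ^ k * (qFact (A i i / 2) k)⁻¹ * (qFact (A i i / 2) (serreN A i j - k))⁻¹) •
      (x i ^ k * x j * x i ^ (serreN A i j - k))

inductive SerreRel (A : I → I → ℤ) : FreeAlgebra KK I → FreeAlgebra KK I → Prop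
  | serre (i j : I) (h : i ≠ j) : SerreRel A (serreElt A (FreeAlgebra.ι KK) i j) 0

abbrev Um (A : I → I → ℤ) : Type := RingQuot (SerreRel A)

def fgen (A : I → I → ℤ) (i : I) : Um A := RingQuot.mkAlgHom KK (SerreRel A) (FreeAlgebra.ι KK i)

def fdiv (A : I → I → ℤ) (i : I) (n : ℕ) : Um A :=
  (qFact (A i i / 2) n)⁻¹ • (fgen A i) ^ n

def IsCartan (A : I → I → ℤ) : Prop :=
  (∀ i j, A i j = A j i) ∧ (∀ i, 0 < A i i) ∧ (∀ i, 2 ∣ A i i) ∧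
  (∀ i j, i ≠ j → A i j ≤ 0) ∧ (∀ i j, A i i ∣ 2 * A i j)

/-- `θ` is a Dynkin-diagram involution. -/
def IsTheta (A : I → I → ℤ) (θ : I → I) : Prop :=
  (∀ i, θ (θ i) = i) ∧ (∀ i j, A (θ i) (θ j) = A i j)

/-- generators of `B_θ(g)`: `E_i`, `F_i`, `T_i` and `T_i⁻¹`. -/
inductive BGen (I : Type) : Type
  | E : I → BGen I
  | F : I → BGen I
  | T : I → BGen I
  | Ti : I → BGen I

def bE (i : I) : FreeAlgebra KK (BGen I) := FreeAlgebra.ι KK (BGen.E i)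
def bF (i : I) : FreeAlgebra KK (BGen I) := FreeAlgebra.ι KK (BGen.F i)
def bT (i : I) : FreeAlgebra KK (BGen I) := FreeAlgebra.ι KK (BGen.T i)
def bTi (i : I) : FreeAlgebra KK (BGen I) := FreeAlgebra.ι KK (BGen.Ti i)

/-- the defining relations of `B_θ(g)`. -/
inductive BRel (A : I → I → ℤ) (θ : I → I) :
    FreeAlgebra KK (BGen I) → FreeAlgebra KK (BGen I) → Prop
  | T_inv_right (i : I) : BRel A θ (bT i * bTi i) 1
  | T_inv_left (i : I) : BRel A θ (bTi i * bT i) 1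
  | T_comm (i j : I) : BRel A θ (bT i * bT j) (bT j * bT i)
  | T_theta (i : I) : BRel A θ (bT (θ i)) (bT i)
  | Ti_theta (i : I) : BRel A θ (bTi (θ i)) (bTi i)
  | TE (i j : I) : BRel A θ (bT i * bE j) (qZ (A i j + A (θ i) j) • (bE j * bT i))
  | TF (i j : I) : BRel A θ (bT i * bF j) (qZ (-(A i j + A (θ i) j)) • (bF j * bT i))
  | EF (i j : I) : BRel A θ (bE i * bF j)
      (qZ (-(A i j)) • (bF j * bE i) + (if i = j then 1 else 0) +
        (if θ i = j then bT i else 0))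
  | Eserre (i j : I) (h : i ≠ j) : BRel A θ (serreElt A bE i j) 0
  | Fserre (i j : I) (h : i ≠ j) : BRel A θ (serreElt A bF i j) 0

abbrev Bth (A : I → I → ℤ) (θ : I → I) : Type := RingQuot (BRel A θ)

def Eg (A : I → I → ℤ) (θ : I → I) (i : I) : Bth A θ :=
  RingQuot.mkAlgHom KK (BRel A θ) (bE i)
def Fg (A : I → I → ℤ) (θ : I → I) (i : I) : Bth A θ :=
  RingQuot.mkAlgHom KK (BRel A θ) (bF i)
def Tg (A : I → I → ℤ) (θ : I → I) (i : I) : Bth A θ :=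
  RingQuot.mkAlgHom KK (BRel A θ) (bT i)
def Tig (A : I → I → ℤ) (θ : I → I) (i : I) : Bth A θ :=
  RingQuot.mkAlgHom KK (BRel A θ) (bTi i)

/-- a dominant integral `θ`-invariant weight `λ`, recorded through the pairings
`lam i = (α_i, λ)`. -/
def IsDomWt (A : I → I → ℤ) (θ : I → I) (lam : I → ℤ) : Prop :=
  (∀ i, 0 ≤ lam i) ∧ (∀ i, A i i ∣ 2 * lam i) ∧ (∀ i, lam (θ i) = lam i)

def IsWt (A : I → I → ℤ) (ν : I →₀ ℕ) (a : Um A) : Prop :=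
  a ∈ Submodule.span KK {x | ∃ L : List I, (∀ i, L.count i = ν i) ∧ x = (L.map (fgen A)).prod}

def EprimRel (A : I → I → ℤ) (E : I → Module.End KK (Um A)) : Prop :=
  (∀ i, E i 1 = 0) ∧
  ∀ i j (a : Um A), E i (fgen A j * a) =
    (if i = j then a else 0) + qZ (-(A i j)) • (fgen A j * (E i a))

def EstarRel (A : I → I → ℤ) (Es : I → Module.End KK (Um A)) : Prop :=
  (∀ i, Es i 1 = 0) ∧
  ∀ i j (a : Um A), Es i (a * fgen A j) =
    (if i = j then a else 0) + qZ (-(A i j)) • ((Es i a) * fgen A j)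

/-- `T` is the operator `Ad(t)` where `(t acting on weight ξ) = q^{⟨w,ξ⟩}`:
on an element of weight `-Σ ν_j α_j` it is multiplication by `q^{-Σ ν_j w j}`. -/
def IsAd (A : I → I → ℤ) (w : I → ℤ) (T : Module.End KK (Um A)) : Prop :=
  ∀ (ν : I →₀ ℕ) (a : Um A), IsWt A ν a →
    T a = qZ (-(∑ j ∈ ν.support, (ν j : ℤ) * w j)) • a

/-!
Both modules are representations on `U_q^-(g)` itself, so every assertion is a relation between the
operators `e_i'`, `e_i^*`, `Ad(t)` and the left and right multiplications by the `f_i`. The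
`q`-boson relations determine how `e_i'` and `e_i^*` commute with each of these and with each other.

The `q`-Serre relations are the substantial part. A `q`-Serre element is a multiple of an iterated
skew bracket `[x, … [x, z]_{c 0} …]_{c (N - 1)}`, whose `c n` run through the geometric progression
`q_i^{N - 1}, q_i^{N - 3}, …, q_i^{1 - N}`; the bracket does not change when the progression is
reversed. If `y_i x_j = q ^ (- (α_i, α_j)) x_j y_i` for all `i`, `j`, then every mixed term of
`serreElt (x + y)` is killed by one bracket, leaving `serreElt x + serreElt y`. This applies to the
two summands of `E_i` on the first module, to those of `F_i` on the second and, after doubling the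
space, to the Serre relations of the `e_i'`.

For the intertwiner, `U_q^-(g) φ'_λ` is generated by `φ'_λ` subject only to `E_i φ'_λ = 0` and
`T_i φ'_λ = q ^ (α_i, λ) φ'_λ`, and `φ''_λ` satisfies these relations.
-/

section QNumbers

lemma qq_ne_zero : qq ≠ 0 := RatFunc.X_ne_zero

lemma qZ_zero : qZ 0 = 1 := zpow_zero _

lemma qZ_ne_zero (n : ℤ) : qZ n ≠ 0 := zpow_ne_zero _ qq_ne_zero

lemma qZ_add (m n : ℤ) : qZ (m + n) = qZ m * qZ n := zpow_add₀ qq_ne_zero m n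

lemma qZ_mul_natCast (m : ℤ) (n : ℕ) : qZ (m * n) = qZ m ^ n := by
  rw [qZ, zpow_mul, zpow_natCast, qZ]

lemma qZ_mul_qZ_neg (n : ℤ) : qZ n * qZ (-n) = 1 := by
  rw [← qZ_add, add_neg_cancel, qZ_zero]

lemma intDegree_qZ (n : ℤ) : (qZ n).intDegree = n := by
  have hX : (qZ 1).intDegree = 1 := by rw [qZ, zpow_one, qq, RatFunc.intDegree_X]
  have add_one (m : ℤ) : (qZ (m + 1)).intDegree = (qZ m).intDegree + 1 := by
    rw [qZ_add, RatFunc.intDegree_mul (qZ_ne_zero _) (qZ_ne_zero _), hX]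
  induction n with
  | zero => rw [qZ_zero, RatFunc.intDegree_one]
  | succ n ih => rw [add_one, ih]
  | pred n ih =>
    have := add_one (-n - 1)
    rw [sub_add_cancel, ih] at this
    exact (eq_sub_of_add_eq this.symm)

lemma qZ_injective : Function.Injective qZ :=
  Function.LeftInverse.injective (g := RatFunc.intDegree) intDegree_qZ

lemma qZ_sub_qZ_neg_ne_zero {n : ℤ} (hn : n ≠ 0) : qZ n - qZ (-n) ≠ 0 :=
  sub_ne_zero.mpr (qZ_injective.ne (by omega))

lemma qInt_eq (d : ℤ) (k : ℕ) : qInt d k = (qZ (d * k) - qZ (-(d * k))) / (qZ d - qZ (-d)) := rfl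

lemma qInt_zero (d : ℤ) : qInt d 0 = 0 := by simp [qInt]

lemma qInt_ne_zero {d : ℤ} (hd : d ≠ 0) {k : ℕ} (hk : k ≠ 0) : qInt d k ≠ 0 :=
  div_ne_zero (qZ_sub_qZ_neg_ne_zero (by simp [hd, hk])) (qZ_sub_qZ_neg_ne_zero hd)

lemma qInt_add (d : ℤ) (k l : ℕ) :
    qInt d (k + l) = qZ (d * l) * qInt d k + qZ (-(d * k)) * qInt d l := by
  simp only [qInt_eq, mul_div_assoc', ← add_div, mul_sub, ← qZ_add]
  congr 1
  push_cast
  ring_nf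

lemma qInt_neg (d : ℤ) (k : ℕ) : qInt (-d) k = qInt d k := by
  simp only [qInt_eq, neg_neg, neg_mul]
  rw [← neg_sub, ← neg_sub (qZ d), neg_div_neg_eq]

lemma qFact_zero (d : ℤ) : qFact d 0 = 1 := rfl

lemma qFact_succ (d : ℤ) (k : ℕ) : qFact d (k + 1) = qFact d k * qInt d (k + 1) :=
  Finset.prod_range_succ _ _

lemma qFact_neg (d : ℤ) (k : ℕ) : qFact (-d) k = qFact d k := by
  simp only [qFact, qInt_neg]

lemma qFact_ne_zero {d : ℤ} (hd : d ≠ 0) (k : ℕ) : qFact d k ≠ 0 :=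
  Finset.prod_ne_zero_iff.mpr fun m _ => qInt_ne_zero hd m.succ_ne_zero

lemma qInt_mul_inv_qFact_succ {d : ℤ} (hd : d ≠ 0) (k : ℕ) :
    qInt d (k + 1) * (qFact d (k + 1))⁻¹ = (qFact d k)⁻¹ := by
  rw [qFact_succ, mul_inv_rev, mul_inv_cancel_left₀ (qInt_ne_zero hd k.succ_ne_zero)]

end QNumbers

section SkewCommute

variable {k R : Type*} [CommSemiring k] [Ring R] [Algebra k R] {α β : k} {x y z : R}

/-- `x` and `y` commute up to the scalar `α`, in the sense that `x y = α y x`. -/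
def SkewCommute (α : k) (x y : R) : Prop := x * y = α • (y * x)

lemma SkewCommute.of_commute (h : Commute x y) : SkewCommute (1 : k) x y := by
  rw [SkewCommute, one_smul, h.eq]

lemma SkewCommute.mul_left (hx : SkewCommute α x z) (hy : SkewCommute β y z) :
    SkewCommute (α * β) (x * y) z := by
  rw [SkewCommute, mul_assoc, hy, mul_smul_comm, ← mul_assoc, hx, smul_mul_assoc, smul_smul,
    mul_assoc, mul_comm]

lemma SkewCommute.mul_right (hx : SkewCommute α z x) (hy : SkewCommute β z y) :
    SkewCommute (α * β) z (x * y) := by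
  rw [SkewCommute, ← mul_assoc, hx, smul_mul_assoc, mul_assoc, hy, mul_smul_comm, smul_smul,
    mul_assoc]

lemma SkewCommute.pow_right (h : SkewCommute α x y) (n : ℕ) : SkewCommute (α ^ n) x (y ^ n) := by
  induction n with
  | zero => simpa only [pow_zero] using .of_commute (Commute.one_right x)
  | succ n ih => simpa only [pow_succ] using ih.mul_right h

lemma SkewCommute.add_right (hx : SkewCommute α z x) (hy : SkewCommute α z y) :
    SkewCommute α z (x + y) := by
  rw [SkewCommute, mul_add, hx, hy, add_mul, smul_add]

lemma SkewCommute.sub_left (hx : SkewCommute α x z) (hy : SkewCommute α y z) :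
    SkewCommute α (x - y) z := by
  rw [SkewCommute, sub_mul, hx, hy, mul_sub, smul_sub]

lemma SkewCommute.sub_right (hx : SkewCommute α z x) (hy : SkewCommute α z y) :
    SkewCommute α z (x - y) := by
  rw [SkewCommute, mul_sub, hx, hy, sub_mul, smul_sub]

lemma SkewCommute.smul_left (h : SkewCommute α x y) (c : k) : SkewCommute α (c • x) y := by
  rw [SkewCommute, smul_mul_assoc, h, mul_smul_comm, smul_comm]

lemma SkewCommute.smul_right (h : SkewCommute α x y) (c : k) : SkewCommute α x (c • y) := by
  rw [SkewCommute, mul_smul_comm, h, smul_mul_assoc, smul_comm]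

end SkewCommute

lemma SkewCommute.qZ_symm {R : Type*} [Ring R] [Algebra KK R] {n : ℤ} {x y : R}
    (h : SkewCommute (qZ n) x y) : SkewCommute (qZ (-n)) y x := by
  rw [SkewCommute, h, smul_smul, mul_comm, qZ_mul_qZ_neg, one_smul]

section SkewBracket

variable {k R : Type*} [CommSemiring k] [Ring R] [Algebra k R]

/-- The iterated skew bracket `[x, … [x, [x, z]_{c 0}]_{c 1} …]_{c (n - 1)}`, where
`[x, w]_c = x w - c w x`. A `q`-Serre element is a multiple of such a bracket, with the `c m` in
geometric progression; unlike the expanded sum, the bracket lends itself to induction. -/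
def skewBracket (c : ℕ → k) (x z : R) : ℕ → R
  | 0 => z
  | n + 1 => x * skewBracket c x z n - c n • (skewBracket c x z n * x)

lemma skewBracket_add_right (c : ℕ → k) (x z z' : R) (n : ℕ) :
    skewBracket c x (z + z') n = skewBracket c x z n + skewBracket c x z' n := by
  induction n with
  | zero => rfl
  | succ n ih => simp only [skewBracket, ih, mul_add, add_mul, smul_add, add_sub_add_comm]

lemma skewBracket_succ_eq_zero (c : ℕ → k) {x z : R} (hxz : x * z = 0) (hzx : z * x = 0) (n : ℕ) :
    skewBracket c x z (n + 1) = 0 := by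
  induction n with
  | zero => simp only [skewBracket, hxz, hzx, smul_zero, sub_zero]
  | succ n ih => rw [skewBracket, ih, mul_zero, zero_mul, smul_zero, sub_zero]

variable {α β : k}

lemma SkewCommute.skewBracket_right {x z y : R} (hx : SkewCommute α y x) (hz : SkewCommute β y z)
    (c : ℕ → k) (n : ℕ) : SkewCommute (α ^ n * β) y (skewBracket c x z n) := by
  induction n with
  | zero => simpa only [pow_zero, one_mul, skewBracket] using hz
  | succ n ih =>
    have hxG := hx.mul_right ih
    have hGx := ih.mul_right hx
    rw [← mul_assoc, ← pow_succ'] at hxG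
    rw [mul_right_comm, ← pow_succ] at hGx
    exact hxG.sub_right (hGx.smul_right _)

lemma SkewCommute.skewBracket_left {x z y : R} (hx : SkewCommute α x y) (hz : SkewCommute β z y)
    (c : ℕ → k) (n : ℕ) : SkewCommute (α ^ n * β) (skewBracket c x z n) y := by
  induction n with
  | zero => simpa only [pow_zero, one_mul, skewBracket] using hz
  | succ n ih =>
    have hxG := hx.mul_left ih
    have hGx := ih.mul_left hx
    rw [← mul_assoc, ← pow_succ'] at hxG
    rw [mul_right_comm, ← pow_succ] at hGx
    exact hxG.sub_left (hGx.smul_left _)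

lemma skewBracket_add_left {x z y : R} (hx : SkewCommute α y x) (hz : SkewCommute β y z) (n : ℕ) :
    skewBracket (fun m => α ^ m * β) (x + y) z n = skewBracket (fun m => α ^ m * β) x z n := by
  induction n with
  | zero => rfl
  | succ n ih =>
    have hy := hx.skewBracket_right hz (fun m => α ^ m * β) n
    rw [skewBracket, skewBracket, ih, add_mul, hy, mul_add, smul_add, add_sub_add_right_eq_sub]

lemma skewBracket_mul_mul {x z t s : R} (hxt : SkewCommute α x t) (hzt : SkewCommute β z t)
    (hxs : SkewCommute β x s) (hts : Commute t s) (c : ℕ → k) (n : ℕ) :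
    skewBracket c (t * x) (s * z) n =
      (∏ m ∈ Finset.range n, α ^ m * β) • (t ^ n * s * skewBracket c x z n) := by
  induction n with
  | zero => simp [skewBracket]
  | succ n ih =>
    set G := skewBracket c x z n
    have hG : SkewCommute (α ^ n * β) G t := hxt.skewBracket_left hzt c n
    have mul_left : t * x * (t ^ n * s * G) = (α ^ n * β) • (t ^ (n + 1) * s * (x * G)) := by
      have := (hxt.pow_right n).mul_right hxs
      rw [mul_assoc t, ← mul_assoc x, this, smul_mul_assoc, mul_smul_comm, pow_succ']
      simp only [mul_assoc]
    have mul_right : t ^ n * s * G * (t * x) = (α ^ n * β) • (t ^ (n + 1) * s * (G * x)) := by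
      rw [mul_assoc _ G, ← mul_assoc G, hG, smul_mul_assoc,
        mul_smul_comm, pow_succ, mul_assoc _ t s, hts.eq]
      simp only [mul_assoc]
    rw [skewBracket, ih, mul_smul_comm, smul_mul_assoc, mul_left, mul_right, smul_comm (c n),
      ← smul_sub, smul_comm (c n), ← smul_sub, ← mul_smul_comm (c n), ← mul_sub, smul_smul,
      ← Finset.prod_range_succ, skewBracket]

end SkewBracket

section DividedPowers

variable {R : Type*} [Ring R] [Algebra KK R]

/-- `x^{(a)} z x^{(b)}`, where `x^{(a)} = x ^ a / [a]!` is the divided power with `q`-parameter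
`q ^ d`. -/
def divPowSandwich (d : ℤ) (x z : R) (a b : ℕ) : R :=
  ((qFact d a)⁻¹ * (qFact d b)⁻¹) • (x ^ a * z * x ^ b)

lemma qInt_smul_divPowSandwich_succ_left {d : ℤ} (hd : d ≠ 0) (x z : R) (a b : ℕ) :
    qInt d (a + 1) • divPowSandwich d x z (a + 1) b = x * divPowSandwich d x z a b := by
  rw [divPowSandwich, divPowSandwich, smul_smul, ← mul_assoc, qInt_mul_inv_qFact_succ hd,
    mul_smul_comm, pow_succ']
  simp only [mul_assoc]

lemma qInt_smul_divPowSandwich_succ_right {d : ℤ} (hd : d ≠ 0) (x z : R) (a b : ℕ) :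
    qInt d (b + 1) • divPowSandwich d x z a (b + 1) = divPowSandwich d x z a b * x := by
  rw [divPowSandwich, divPowSandwich, smul_smul, mul_left_comm, qInt_mul_inv_qFact_succ hd,
    smul_mul_assoc, pow_succ]
  simp only [mul_assoc]

/-- The expansion of the iterated skew bracket with coefficients `c n = q ^ (d (t - 2 n))`, divided
by `[N]!`, see `skewBracket_eq_qFact_smul_divPowSum`. For `t = N - 1` it is the `q`-Serre
polynomial; varying `t` independently of `N` is what makes the induction on `N` work. -/
def divPowSum (d t : ℤ) (x z : R) (N : ℕ) : R :=
  ∑ p ∈ Finset.HasAntidiagonal.antidiagonal N,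
    ((-1) ^ p.2 * qZ (d * (t - N + 1) * p.2)) • divPowSandwich d x z p.1 p.2

/-- `[a + b] = q ^ (d b) [a] + q ^ (- d a) [b]` splits the left-hand side into the two terms. -/
lemma qInt_smul_divPowSum_succ {d : ℤ} (hd : d ≠ 0) (t : ℤ) (x z : R) (N : ℕ) :
    qInt d (N + 1) • divPowSum d t x z (N + 1) =
      x * divPowSum d t x z N - qZ (d * (t - 2 * N)) • (divPowSum d t x z N * x) := by
  have split : qInt d (N + 1) • divPowSum d t x z (N + 1) =
      (∑ p ∈ Finset.HasAntidiagonal.antidiagonal (N + 1),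
        ((-1) ^ p.2 * qZ (d * (t - N + 1) * p.2)) •
          qInt d p.1 • divPowSandwich d x z p.1 p.2) +
      ∑ p ∈ Finset.HasAntidiagonal.antidiagonal (N + 1),
        ((-1) ^ p.2 * (qZ (-(d * p.1)) * qZ (d * (t - N) * p.2))) •
          qInt d p.2 • divPowSandwich d x z p.1 p.2 := by
    rw [divPowSum, Finset.smul_sum, ← Finset.sum_add_distrib]
    refine Finset.sum_congr rfl fun p hp => ?_
    have hqInt : qInt d (N + 1) = qZ (d * p.2) * qInt d p.1 + qZ (-(d * p.1)) * qInt d p.2 := by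
      rw [← Finset.HasAntidiagonal.mem_antidiagonal.mp hp, qInt_add]
    have hexp : d * (t - (N + 1 : ℕ) + 1) * p.2 = d * (t - N) * p.2 := by push_cast; ring
    have hqZ : qZ (d * (t - N + 1) * p.2) = qZ (d * p.2) * qZ (d * (t - N) * p.2) := by
      rw [← qZ_add]
      ring_nf
    simp only [smul_smul, ← add_smul, hqInt, hexp, hqZ]
    ring_nf
  rw [split, Finset.Nat.sum_antidiagonal_succ, Finset.Nat.sum_antidiagonal_succ']
  simp only [qInt_zero, zero_smul, smul_zero, zero_add,
    qInt_smul_divPowSandwich_succ_left hd, qInt_smul_divPowSandwich_succ_right hd]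
  rw [divPowSum, Finset.mul_sum, Finset.sum_mul, Finset.smul_sum,
    sub_eq_add_neg (Finset.sum _ _), ← Finset.sum_neg_distrib]
  simp only [mul_smul_comm, smul_mul_assoc, smul_smul, ← neg_smul]
  congr 1
  refine Finset.sum_congr rfl fun p hp => ?_
  have hq : qZ (-(d * p.1)) * qZ (d * (t - N) * (p.2 + 1 : ℕ)) =
      qZ (d * (t - 2 * N)) * qZ (d * (t - N + 1) * p.2) := by
    rw [← qZ_add, ← qZ_add, ← Finset.HasAntidiagonal.mem_antidiagonal.mp hp]
    push_cast
    ring_nf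
  rw [hq, pow_succ]
  ring_nf

lemma skewBracket_eq_qFact_smul_divPowSum {d : ℤ} (hd : d ≠ 0) (t : ℤ) (x z : R) (N : ℕ) :
    skewBracket (fun n : ℕ => qZ (d * (t - 2 * n))) x z N = qFact d N • divPowSum d t x z N := by
  induction N with
  | zero => simp [skewBracket, divPowSum, divPowSandwich, qFact_zero, qZ_zero]
  | succ N ih =>
    rw [skewBracket, ih, qFact_succ, mul_smul, qInt_smul_divPowSum_succ hd, smul_sub,
      mul_smul_comm, smul_mul_assoc, smul_comm (qZ _)]

lemma divPowSum_sub_one (d : ℤ) (x z : R) (N : ℕ) :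
    divPowSum d (N - 1) x z N =
      ∑ p ∈ Finset.HasAntidiagonal.antidiagonal N,
        (-1 : KK) ^ p.2 • divPowSandwich d x z p.1 p.2 := by
  simp only [divPowSum, show (N : ℤ) - 1 - N + 1 = 0 by ring, mul_zero, zero_mul, qZ_zero, mul_one]

lemma skewBracket_neg {d : ℤ} (hd : d ≠ 0) (x z : R) (N : ℕ) :
    skewBracket (fun n : ℕ => qZ (-d * (N - 1 - 2 * n))) x z N =
      skewBracket (fun n : ℕ => qZ (d * (N - 1 - 2 * n))) x z N := by
  simp only [skewBracket_eq_qFact_smul_divPowSum, hd, ne_eq, neg_eq_zero, not_false_eq_true,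
    divPowSum_sub_one, divPowSandwich, qFact_neg]

end DividedPowers

section SerreElements

variable {ι R S : Type} [Ring R] [Algebra KK R] [Ring S] [Algebra KK S]

lemma serreElt_eq_sum_antidiagonal (A : ι → ι → ℤ) (x : ι → R) (i j : ι) :
    serreElt A x i j = ∑ p ∈ Finset.HasAntidiagonal.antidiagonal (serreN A i j),
      (-1 : KK) ^ p.1 • divPowSandwich (A i i / 2) (x i) (x j) p.1 p.2 := by
  simp only [serreElt, divPowSandwich, Finset.Nat.sum_antidiagonal_eq_sum_range_succ_mk, smul_smul,
    mul_assoc, Nat.succ_eq_add_one]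

lemma serreElt_map (φ : R →ₐ[KK] S) (A : ι → ι → ℤ) (x : ι → R) (i j : ι) :
    serreElt A (fun k => φ (x k)) i j = φ (serreElt A x i j) := by
  simp only [serreElt, map_sum, map_smul, map_mul, map_pow]

lemma serreElt_prodMk (A : ι → ι → ℤ) (x : ι → R) (y : ι → S) (i j : ι) :
    serreElt A (fun k => (x k, y k)) i j = (serreElt A x i j, serreElt A y i j) :=
  Prod.ext (serreElt_map (AlgHom.fst KK R S) A (fun k => (x k, y k)) i j).symm
    (serreElt_map (AlgHom.snd KK R S) A (fun k => (x k, y k)) i j).symm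

lemma serreElt_op (A : ι → ι → ℤ) (x : ι → R) (i j : ι) :
    serreElt A (fun k => MulOpposite.op (x k)) i j =
      (-1 : KK) ^ serreN A i j • MulOpposite.op (serreElt A x i j) := by
  have reverse (d : ℤ) (y z : R) (a b : ℕ) :
      divPowSandwich d (MulOpposite.op y) (MulOpposite.op z) a b =
        MulOpposite.op (divPowSandwich d y z b a) := by
    simp only [divPowSandwich, MulOpposite.op_smul, MulOpposite.op_mul, MulOpposite.op_pow,
      mul_assoc, mul_comm]
  rw [serreElt_eq_sum_antidiagonal, serreElt_eq_sum_antidiagonal, Finset.op_sum, Finset.smul_sum,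
    ← Finset.Nat.sum_antidiagonal_swap]
  refine Finset.sum_congr rfl fun p hp => ?_
  have sign : (-1 : KK) ^ (p.1 + p.2) * (-1) ^ p.1 = (-1) ^ p.2 := by
    rw [pow_add, mul_right_comm, ← mul_pow, neg_one_mul, neg_neg, one_pow, one_mul]
  rw [Prod.fst_swap, Prod.snd_swap, reverse, MulOpposite.op_smul, smul_smul,
    ← Finset.HasAntidiagonal.mem_antidiagonal.mp hp, sign]

lemma serreElt_smul (A : ι → ι → ℤ) (c : ι → KK) (x : ι → R) (i j : ι) :
    serreElt A (fun k => c k • x k) i j = (c i ^ serreN A i j * c j) • serreElt A x i j := by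
  simp only [serreElt_eq_sum_antidiagonal, Finset.smul_sum]
  refine Finset.sum_congr rfl fun p hp => ?_
  rw [← Finset.HasAntidiagonal.mem_antidiagonal.mp hp]
  simp only [divPowSandwich, smul_pow, smul_mul_assoc, mul_smul_comm, smul_smul]
  ring_nf

lemma serreElt_comp {A : ι → ι → ℤ} {θ : ι → ι} (hθ : ∀ i j, A (θ i) (θ j) = A i j) (x : ι → R)
    (i j : ι) : serreElt A (fun k => x (θ k)) i j = serreElt A x (θ i) (θ j) := by
  simp only [serreElt, serreN, hθ]

lemma serreElt_intertwine {V W : Type} [AddCommGroup V] [Module KK V] [AddCommGroup W]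
    [Module KK W] {A : ι → ι → ℤ} {x : ι → Module.End KK V} {y : ι → Module.End KK W}
    {Q : W →ₗ[KK] V} (h : ∀ k w, x k (Q w) = Q (y k w)) (i j : ι) (w : W) :
    serreElt A x i j (Q w) = Q (serreElt A y i j w) := by
  have pow (n : ℕ) (w : W) : (x i ^ n) (Q w) = Q ((y i ^ n) w) :=
    LinearMap.congr_fun (Module.End.commute_pow_left_of_commute (LinearMap.ext (h i)) n) w
  simp only [serreElt, LinearMap.sum_apply, LinearMap.smul_apply, Module.End.mul_apply, pow, h,
    map_sum, map_smul]

end SerreElements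

section Cartan

variable {ι : Type} {A : ι → ι → ℤ} {i j : ι}

lemma IsCartan.half_ne_zero (hA : IsCartan A) (i : ι) : A i i / 2 ≠ 0 := by
  obtain ⟨-, hpos, htwo, -⟩ := hA
  have := hpos i
  have := htwo i
  omega

lemma IsCartan.two_mul_half (hA : IsCartan A) (i : ι) : 2 * (A i i / 2) = A i i :=
  Int.mul_ediv_cancel' (hA.2.2.1 i)

lemma IsCartan.one_le_serreN (hA : IsCartan A) (hij : i ≠ j) : 1 ≤ serreN A i j := by
  obtain ⟨-, hpos, -, hneg, -⟩ := hA
  have : 2 * A i j / A i i ≤ 0 :=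
    Int.ediv_nonpos_of_nonpos_of_neg (by linarith [hneg i j hij]) (hpos i)
  rw [serreN]
  omega

lemma IsCartan.half_mul_serreN_sub_one (hA : IsCartan A) (hij : i ≠ j) :
    A i i / 2 * (serreN A i j - 1) = -A i j := by
  have hN : (serreN A i j : ℤ) = 1 - 2 * A i j / A i i := by
    have := hA.one_le_serreN hij
    rw [serreN] at this ⊢
    omega
  have hdiv : A i i * (2 * A i j / A i i) = 2 * A i j := Int.mul_ediv_cancel' (hA.2.2.2.2 i j)
  refine mul_left_cancel₀ (two_ne_zero' ℤ) ?_
  rw [hN]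
  linear_combination -hdiv - 2 * A i j / A i i * hA.two_mul_half i

variable {R : Type} [Ring R] [Algebra KK R]

lemma IsCartan.qZ_half_mul (hA : IsCartan A) (hij : i ≠ j) (n : ℕ) :
    qZ (A i i / 2 * (serreN A i j - 1 - 2 * n)) = qZ (-A i i) ^ n * qZ (-A i j) := by
  rw [← qZ_mul_natCast, ← qZ_add]
  congr 1
  linear_combination hA.half_mul_serreN_sub_one hij - n * hA.two_mul_half i

lemma IsCartan.qZ_neg_half_mul (hA : IsCartan A) (hij : i ≠ j) (n : ℕ) :
    qZ (-(A i i / 2) * (serreN A i j - 1 - 2 * n)) = qZ (A i i) ^ n * qZ (A i j) := by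
  rw [← qZ_mul_natCast, ← qZ_add]
  congr 1
  linear_combination n * hA.two_mul_half i - hA.half_mul_serreN_sub_one hij

lemma IsCartan.skewBracket_serreN_neg (hA : IsCartan A) (hij : i ≠ j) (x z : R) :
    skewBracket (fun n => qZ (A i i) ^ n * qZ (A i j)) x z (serreN A i j) =
      skewBracket (fun n => qZ (-A i i) ^ n * qZ (-A i j)) x z (serreN A i j) := by
  simpa only [hA.qZ_half_mul hij, hA.qZ_neg_half_mul hij] using
    skewBracket_neg (hA.half_ne_zero i) x z (serreN A i j)

lemma IsCartan.serreElt_eq_smul_skewBracket (hA : IsCartan A) (hij : i ≠ j) (x : ι → R) :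
    serreElt A x i j = ((-1) ^ serreN A i j * (qFact (A i i / 2) (serreN A i j))⁻¹) •
      skewBracket (fun n => qZ (-A i i) ^ n * qZ (-A i j)) (x i) (x j) (serreN A i j) := by
  simp only [← hA.qZ_half_mul hij]
  rw [skewBracket_eq_qFact_smul_divPowSum (hA.half_ne_zero i), smul_smul, mul_assoc,
    inv_mul_cancel₀ (qFact_ne_zero (hA.half_ne_zero i) _), mul_one, serreElt_eq_sum_antidiagonal,
    divPowSum_sub_one, Finset.smul_sum]
  refine Finset.sum_congr rfl fun p hp => ?_
  have sign : (-1 : KK) ^ (p.1 + p.2) * (-1) ^ p.2 = (-1) ^ p.1 := by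
    rw [pow_add, mul_assoc, ← mul_pow, neg_one_mul, neg_neg, one_pow, mul_one]
  rw [smul_smul, ← Finset.HasAntidiagonal.mem_antidiagonal.mp hp, sign]

lemma IsCartan.serreElt_add (hA : IsCartan A) (hij : i ≠ j) {x y : ι → R}
    (h : ∀ a b, SkewCommute (qZ (-A a b)) (y a) (x b)) :
    serreElt A (fun k => x k + y k) i j = serreElt A x i j + serreElt A y i j := by
  have h' (a b) : SkewCommute (qZ (A a b)) (x a) (y b) := by
    simpa only [neg_neg, hA.1 b a] using (h b a).qZ_symm
  simp only [hA.serreElt_eq_smul_skewBracket hij, ← smul_add]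
  rw [skewBracket_add_right, skewBracket_add_left (h i i) (h i j), add_comm (x i),
    ← hA.skewBracket_serreN_neg hij _ (y j), skewBracket_add_left (h' i i) (h' i j),
    hA.skewBracket_serreN_neg hij]

lemma IsCartan.serreElt_mul_eq_zero (hA : IsCartan A) (hij : i ≠ j) {u : ι → ι → KK}
    (hu : ∀ a b, u a b = u b a) {x t : ι → R} (hxt : ∀ a b, SkewCommute (u a b) (x a) (t b))
    (ht : ∀ a b, Commute (t a) (t b)) (hx : serreElt A x i j = 0) :
    serreElt A (fun k => t k * x k) i j = 0 := by
  rw [hA.serreElt_eq_smul_skewBracket hij, smul_eq_zero_iff_right] at hx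
  · rw [hA.serreElt_eq_smul_skewBracket hij,
      skewBracket_mul_mul (hxt i i) (hu i j ▸ hxt j i) (hxt i j) (ht i j), hx, mul_zero, smul_zero,
      smul_zero]
  · exact mul_ne_zero (pow_ne_zero _ (by norm_num))
      (inv_ne_zero (qFact_ne_zero (hA.half_ne_zero i) _))

lemma IsCartan.serreElt_eq_zero_of_mul_eq_zero (hA : IsCartan A) (hij : i ≠ j) {x : ι → R}
    (hx : ∀ a b, x a * x b = 0) : serreElt A x i j = 0 := by
  obtain ⟨n, hn⟩ := Nat.exists_eq_succ_of_ne_zero (Nat.one_le_iff_ne_zero.mp (hA.one_le_serreN hij))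
  rw [hA.serreElt_eq_smul_skewBracket hij, hn, skewBracket_succ_eq_zero _ (hx i j) (hx j i),
    smul_zero]

end Cartan

section QBoson

variable {ι V : Type} [DecidableEq ι] [AddCommGroup V] [Module KK V]

/-- The `q`-boson relations: `V` is generated from the vacuum `v` by the creation operators `P j`,
and the annihilation operators `e i` kill `v` and satisfy
`e i (P j a) = δ_{ij} a + q ^ (- A i j) P j (e i a)`. They are satisfied by `e_i'` with the left
multiplications by the `f_j`, and by `e_i^*` with the right multiplications. -/
structure IsQBoson (A : ι → ι → ℤ) (v : V) (P e : ι → Module.End KK V) : Prop where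
  annihilate_vacuum : ∀ i, e i v = 0
  annihilate_create : ∀ i j a,
    e i (P j a) = (if i = j then a else 0) + qZ (-A i j) • P j (e i a)
  eq_top : ∀ W : Submodule KK V, v ∈ W → (∀ j, ∀ a ∈ W, P j a ∈ W) → W = ⊤

variable {A : ι → ι → ℤ} {v : V} {P e : ι → Module.End KK V}

lemma IsQBoson.hom_ext {W : Type} [AddCommGroup W] [Module KK W] (h : IsQBoson A v P e)
    {X Y : V →ₗ[KK] W} (hv : X v = Y v) (hP : ∀ j a, X a = Y a → X (P j a) = Y (P j a)) : X = Y :=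
  LinearMap.eqLocus_eq_top.mp (h.eq_top (LinearMap.eqLocus X Y) hv hP)

lemma IsQBoson.serreElt_vacuum (h : IsQBoson A v P e) (i j : ι) : serreElt A e i j v = 0 := by
  have := serreElt_intertwine (A := A) (x := e) (y := fun _ => 0)
    (Q := LinearMap.toSpanSingleton KK V v) (fun k w => by simp [h.annihilate_vacuum]) i j 1
  simpa [serreElt] using this

/-- With `Q (a, b) = P k a + b`, the relation `annihilate_create` says that `Q` intertwines
`e i` with the sum of `q ^ (- A i k) e i × e i` and the nilpotent operator `(a, b) ↦ (0, δ_{ik} a)`,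
which skew-commute. -/
lemma IsQBoson.serreElt_create (h : IsQBoson A v P e) (hA : IsCartan A) {i j : ι} (hij : i ≠ j)
    (k : ι) (a : V) : serreElt A e i j (P k a) =
      (qZ (-A i k) ^ serreN A i j * qZ (-A j k)) • P k (serreElt A e i j a) := by
  let L (l : ι) : Module.End KK (V × V) := (qZ (-A l k) • e l).prodMap (e l)
  let Y (l : ι) : Module.End KK (V × V) :=
    LinearMap.inr KK V V ∘ₗ ((if l = k then (1 : KK) else 0) • LinearMap.fst KK V V)
  have hLY (l m : ι) : SkewCommute (qZ (-A l m)) (Y l) (L m) := by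
    rcases eq_or_ne l k with rfl | hl
    · ext <;> simp [L, Y, hA.1 l m]
    · ext <;> simp [L, Y, hl]
  have hYY (l m : ι) : Y l * Y m = 0 := by
    ext <;> by_cases hl : l = k <;> simp [Y, hl]
  have hL : serreElt A L i j =
      ((qZ (-A i k) ^ serreN A i j * qZ (-A j k)) • serreElt A e i j).prodMap
        (serreElt A e i j) := by
    have := serreElt_map (LinearMap.prodMapAlgHom KK V V) A (fun l => (qZ (-A l k) • e l, e l)) i j
    rw [serreElt_prodMk, serreElt_smul] at this
    exact this
  have intertwine := serreElt_intertwine (A := A) (x := e) (y := fun l => L l + Y l)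
    (Q := (P k).coprod LinearMap.id) (fun l w => by
      by_cases hl : l = k <;> simp [L, Y, hl, h.annihilate_create]; abel) i j (a, 0)
  rw [hA.serreElt_add hij hLY, hA.serreElt_eq_zero_of_mul_eq_zero hij hYY, add_zero, hL]
    at intertwine
  simpa using intertwine

lemma IsQBoson.serreElt_eq_zero (h : IsQBoson A v P e) (hA : IsCartan A) {i j : ι} (hij : i ≠ j) :
    serreElt A e i j = 0 :=
  h.hom_ext (h.serreElt_vacuum i j) fun k a ha => by
    rw [h.serreElt_create hA hij, ha, LinearMap.zero_apply, map_zero, smul_zero,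
      LinearMap.zero_apply]

lemma IsQBoson.skewCommute_annihilate (h : IsQBoson A v P e) {w : ι → ℤ} {D : Module.End KK V}
    (hv : D v = v) (hP : ∀ j, SkewCommute (qZ (-w j)) D (P j)) (i : ι) :
    SkewCommute (qZ (w i)) D (e i) := by
  have hDP (j a) : D (P j a) = qZ (-w j) • P j (D a) := LinearMap.congr_fun (hP j) a
  refine h.hom_ext (by simp [h.annihilate_vacuum, hv]) fun j a ha => ?_
  simp only [Module.End.mul_apply, LinearMap.smul_apply] at ha ⊢
  simp only [h.annihilate_create, hDP, map_add, map_smul, ha, smul_add, smul_smul]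
  congr 1
  · split_ifs with hij
    · rw [hij, qZ_mul_qZ_neg, one_smul]
    · rw [map_zero, smul_zero]
  · ring_nf

lemma IsQBoson.annihilate_mul_of_commute (h : IsQBoson A v P e) {i : ι} {D X : Module.End KK V}
    (hDv : D v = v) (hDP : ∀ j, SkewCommute (qZ (-A i j)) D (P j)) (hX : ∀ j, Commute X (P j))
    {c : KK} (hc : e i (X v) = c • v) : e i * X = X * e i + c • D := by
  have hXP (j a) : X (P j a) = P j (X a) := LinearMap.congr_fun (hX j) a
  have hDP (j a) : D (P j a) = qZ (-A i j) • P j (D a) := LinearMap.congr_fun (hDP j) a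
  refine h.hom_ext (by simp [h.annihilate_vacuum, hDv, hc]) fun j a ha => ?_
  simp only [Module.End.mul_apply, LinearMap.add_apply, LinearMap.smul_apply] at ha ⊢
  simp only [h.annihilate_create, hXP, hDP, map_add, map_smul, ha, smul_add, add_assoc, smul_comm c,
    apply_ite X, map_zero]

variable {R s : ι → Module.End KK V}

/-- For `e_i'` and `e_j^*`, this is the rule `e_i'(a f_j) = (e_i' a) f_j + δ_{ij} Ad(t_i) a`. -/
lemma IsQBoson.annihilate_mul_create (hPe : IsQBoson A v P e) (hPR : ∀ i j, Commute (P i) (R j))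
    (hv : ∀ j, R j v = P j v) {i : ι} {D : Module.End KK V} (hDv : D v = v)
    (hDP : ∀ j, SkewCommute (qZ (-A i j)) D (P j)) (j : ι) :
    e i * R j = R j * e i + (if i = j then (1 : KK) else 0) • D :=
  hPe.annihilate_mul_of_commute hDv hDP (fun k => (hPR k j).symm) <| by
    rw [hv, hPe.annihilate_create, hPe.annihilate_vacuum, map_zero, smul_zero, add_zero, ite_smul,
      one_smul, zero_smul]

lemma IsQBoson.commute_annihilate (hPe : IsQBoson A v P e) (hRs : IsQBoson A v R s)
    (hA : ∀ i j, A i j = A j i) (hPR : ∀ i j, Commute (P i) (R j)) (hv : ∀ j, R j v = P j v)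
    {i : ι} {D : Module.End KK V} (hDv : D v = v) (hDP : ∀ j, SkewCommute (qZ (-A i j)) D (P j))
    (hDR : ∀ j, SkewCommute (qZ (-A i j)) D (R j)) (j : ι) : Commute (e i) (s j) := by
  have heR (k a) : e i (R k a) = R k (e i a) + (if i = k then (1 : KK) else 0) • D a :=
    LinearMap.congr_fun (hPe.annihilate_mul_create hPR hv hDv hDP k) a
  have hsD (a) : s j (D a) = qZ (-A i j) • D (s j a) :=
    LinearMap.congr_fun (hRs.skewCommute_annihilate hDv hDR j).qZ_symm a
  refine hRs.hom_ext (by simp [hPe.annihilate_vacuum, hRs.annihilate_vacuum]) fun k a ha => ?_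
  simp only [Module.End.mul_apply] at ha ⊢
  simp only [hRs.annihilate_create, heR, map_add, map_smul, ha, hsD, smul_add, apply_ite (e i),
    map_zero, add_assoc]
  rcases eq_or_ne i k with rfl | hik
  · rw [if_pos rfl, one_smul, one_smul, hA j i]
  · rw [if_neg hik, zero_smul, zero_smul, smul_zero]

end QBoson

section Generators

variable {ι R : Type} [Ring R] [Algebra KK R]

lemma subalgebra_eq_top_of_mkAlgHom_ι_mem {r : FreeAlgebra KK ι → FreeAlgebra KK ι → Prop}
    {S : Subalgebra KK (RingQuot r)} (hS : ∀ k, RingQuot.mkAlgHom KK r (FreeAlgebra.ι KK k) ∈ S) :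
    S = ⊤ := by
  have hcomap : S.comap (RingQuot.mkAlgHom KK r) = ⊤ := by
    rw [eq_top_iff, ← FreeAlgebra.adjoin_range_ι, Algebra.adjoin_le_iff]
    rintro _ ⟨k, rfl⟩
    exact hS k
  refine Algebra.eq_top_iff.mpr fun x => ?_
  obtain ⟨y, rfl⟩ := RingQuot.mkAlgHom_surjective KK r x
  exact Algebra.eq_top_iff.mp hcomap y

end Generators

namespace Um

variable {ι R : Type} [Ring R] [Algebra KK R] {A : ι → ι → ℤ}

lemma serreElt_fgen {i j : ι} (hij : i ≠ j) : serreElt A (fgen A) i j = 0 := by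
  have := RingQuot.mkAlgHom_rel KK (SerreRel.serre (A := A) i j hij)
  rwa [map_zero, ← serreElt_map] at this

/-- The universal property of `U_q^-(g)`. -/
def lift (x : ι → R) (hx : ∀ i j, i ≠ j → serreElt A x i j = 0) : Um A →ₐ[KK] R :=
  RingQuot.liftAlgHom KK ⟨FreeAlgebra.lift KK x, by
    rintro _ _ ⟨i, j, hij⟩
    rw [← serreElt_map, map_zero, ← hx i j hij]
    simp only [FreeAlgebra.lift_ι_apply]⟩

lemma lift_fgen {x : ι → R} (hx : ∀ i j, i ≠ j → serreElt A x i j = 0) (i : ι) :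
    lift x hx (fgen A i) = x i := by
  rw [lift, fgen, RingQuot.liftAlgHom_mkAlgHom_apply, FreeAlgebra.lift_ι_apply]

lemma span_range_prod_map_fgen :
    Submodule.span KK (Set.range fun l : List ι => (l.map (fgen A)).prod) = ⊤ := by
  have hadjoin : Algebra.adjoin KK (Set.range (fgen A)) = ⊤ :=
    subalgebra_eq_top_of_mkAlgHom_ι_mem fun k => Algebra.subset_adjoin ⟨k, rfl⟩
  rw [← Algebra.top_toSubmodule, ← hadjoin, Algebra.adjoin_eq_span, Submonoid.closure_eq_image_prod,
    ← Set.range_list_map, ← Set.range_comp]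
  rfl

lemma submodule_eq_top_of_prod_mem {W : Submodule KK (Um A)}
    (hW : ∀ l : List ι, (l.map (fgen A)).prod ∈ W) : W = ⊤ := by
  rw [eq_top_iff, ← span_range_prod_map_fgen, Submodule.span_le]
  rintro _ ⟨l, rfl⟩
  exact hW l

lemma submodule_eq_top_of_fgen_mul_mem {W : Submodule KK (Um A)} (h1 : 1 ∈ W)
    (hW : ∀ i, ∀ a ∈ W, fgen A i * a ∈ W) : W = ⊤ :=
  submodule_eq_top_of_prod_mem fun l => by
    induction l with
    | nil => exact h1
    | cons i l ih => rw [List.map_cons, List.prod_cons]; exact hW i _ ih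

lemma submodule_eq_top_of_mul_fgen_mem {W : Submodule KK (Um A)} (h1 : 1 ∈ W)
    (hW : ∀ i, ∀ a ∈ W, a * fgen A i ∈ W) : W = ⊤ :=
  submodule_eq_top_of_prod_mem fun l => by
    induction l using List.reverseRecOn with
    | nil => exact h1
    | append_singleton l i ih =>
      rw [List.map_append, List.prod_append, List.map_singleton, List.prod_singleton]
      exact hW i _ ih

lemma algHom_ext {φ ψ : Um A →ₐ[KK] R} (h : ∀ i, φ (fgen A i) = ψ (fgen A i)) : φ = ψ :=
  RingQuot.ringQuot_ext' KK _ _ (FreeAlgebra.hom_ext (funext h))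

/-- The automorphism `Ad(t)` of `U_q^-(g)`, where `w j` is the pairing of `t` with `α_j`; it is
defined on the generators, see `IsAd.eq_ad` for the comparison with `IsAd`. -/
def ad (w : ι → ℤ) : Um A →ₐ[KK] Um A :=
  lift (fun i => qZ (-w i) • fgen A i) fun i j hij => by
    rw [serreElt_smul, serreElt_fgen hij, smul_zero]

lemma ad_fgen (w : ι → ℤ) (i : ι) : ad w (fgen A i) = qZ (-w i) • fgen A i := lift_fgen _ i

lemma ad_ad (w w' : ι → ℤ) (a : Um A) : ad w (ad w' a) = ad (w + w') a := by
  suffices (ad w).comp (ad w') = ad (A := A) (w + w') from DFunLike.congr_fun this a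
  refine algHom_ext fun i => ?_
  simp only [AlgHom.comp_apply, ad_fgen, map_smul, smul_smul, ← qZ_add, Pi.add_apply]
  ring_nf

lemma ad_zero (a : Um A) : ad 0 a = a := by
  suffices ad 0 = AlgHom.id KK (Um A) from DFunLike.congr_fun this a
  refine algHom_ext fun i => ?_
  rw [ad_fgen, Pi.zero_apply, neg_zero, qZ_zero, one_smul, AlgHom.id_apply]

lemma ad_prod_map_fgen (w : ι → ℤ) (l : List ι) :
    ad w (l.map (fgen A)).prod = qZ (-(l.map w).sum) • (l.map (fgen A)).prod := by
  induction l with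
  | nil => simp [qZ_zero]
  | cons i l ih =>
    rw [List.map_cons, List.prod_cons, map_mul, ih, ad_fgen, smul_mul_smul_comm, ← qZ_add,
      List.map_cons, List.sum_cons, neg_add]

/-- The invertible operator `a ↦ q ^ n Ad(t) a`, where `w j` is the pairing of `t` with `α_j`. All
the torus operators of the two modules are of this form. -/
def weightOp (n : ℤ) (w : ι → ℤ) : (Module.End KK (Um A))ˣ where
  val := qZ n • (ad w).toLinearMap
  inv := qZ (-n) • (ad (-w)).toLinearMap
  val_inv := by
    ext a
    simp [ad_ad, ad_zero, smul_smul, mul_comm _ (qZ n), qZ_mul_qZ_neg]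
  inv_val := by
    ext a
    simp [ad_ad, ad_zero, smul_smul, qZ_mul_qZ_neg]

lemma weightOp_apply (n : ℤ) (w : ι → ℤ) (a : Um A) :
    (weightOp (A := A) n w).val a = qZ n • ad w a := rfl

lemma weightOp_mul (n n' : ℤ) (w w' : ι → ℤ) :
    weightOp (A := A) n w * weightOp n' w' = weightOp (n + n') (w + w') := by
  ext a
  simp [weightOp_apply, ad_ad, smul_smul, qZ_add, mul_comm]

lemma commute_weightOp (n n' : ℤ) (w w' : ι → ℤ) :
    Commute (weightOp (A := A) n w) (weightOp n' w') := by
  rw [Commute, SemiconjBy, weightOp_mul, weightOp_mul, add_comm n, add_comm w]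

/-- Left multiplication by the generator `f_i`. -/
def fLeft (i : ι) : Module.End KK (Um A) := LinearMap.mulLeft KK (fgen A i)

/-- Right multiplication by the generator `f_i`. -/
def fRight (i : ι) : Module.End KK (Um A) := LinearMap.mulRight KK (fgen A i)

lemma fLeft_apply (i : ι) (a : Um A) : fLeft i a = fgen A i * a := rfl

lemma fRight_apply (i : ι) (a : Um A) : fRight i a = a * fgen A i := rfl

lemma commute_fLeft_fRight (i j : ι) : Commute (fLeft (A := A) i) (fRight j) :=
  LinearMap.ext fun a => (mul_assoc (fgen A i) a (fgen A j)).symm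

lemma skewCommute_weightOp_fLeft (n : ℤ) (w : ι → ℤ) (i : ι) :
    SkewCommute (qZ (-w i)) (weightOp (A := A) n w).val (fLeft i) := by
  ext a
  simpa [weightOp_apply, fLeft_apply, ad_fgen] using smul_comm _ _ _

lemma skewCommute_weightOp_fRight (n : ℤ) (w : ι → ℤ) (i : ι) :
    SkewCommute (qZ (-w i)) (weightOp (A := A) n w).val (fRight i) := by
  ext a
  simpa [weightOp_apply, fRight_apply, ad_fgen] using smul_comm _ _ _

lemma serreElt_fLeft {i j : ι} (hij : i ≠ j) : serreElt A (fLeft (A := A)) i j = 0 := by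
  have := serreElt_map (S := Module.End KK (Um A)) (Algebra.lmul KK (Um A)) A (fgen A) i j
  rwa [serreElt_fgen hij, map_zero] at this

lemma serreElt_fRight {i j : ι} (hij : i ≠ j) : serreElt A (fRight (A := A)) i j = 0 := by
  have := serreElt_map (S := Module.End KK (Um A)) (Algebra.lsmul KK KK (Um A)) A
    (fun k => MulOpposite.op (fgen A k)) i j
  rwa [serreElt_op, serreElt_fgen hij, MulOpposite.op_zero, smul_zero, map_zero] at this

end Um

section Operators

variable {ι : Type} [DecidableEq ι] {A : ι → ι → ℤ}

lemma IsAd.eq_ad {w : ι → ℤ} {T : Module.End KK (Um A)} (hT : IsAd A w T) (a : Um A) :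
    T a = Um.ad w a := by
  suffices T = (Um.ad w).toLinearMap from LinearMap.congr_fun this a
  refine LinearMap.ext_on_range Um.span_range_prod_map_fgen fun l => ?_
  have hwt : IsWt A (Multiset.toFinsupp (l : Multiset ι)) (l.map (fgen A)).prod :=
    Submodule.subset_span ⟨l, fun i => by simp, rfl⟩
  rw [hT _ _ hwt, AlgHom.toLinearMap_apply, Um.ad_prod_map_fgen, Finset.sum_list_map_count]
  simp

lemma EprimRel.isQBoson {E : ι → Module.End KK (Um A)} (hE : EprimRel A E) :
    IsQBoson A 1 Um.fLeft E :=
  ⟨hE.1, hE.2, fun _ => Um.submodule_eq_top_of_fgen_mul_mem⟩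

lemma EstarRel.isQBoson {Es : ι → Module.End KK (Um A)} (hEs : EstarRel A Es) :
    IsQBoson A 1 Um.fRight Es :=
  ⟨hEs.1, hEs.2, fun _ => Um.submodule_eq_top_of_mul_fgen_mem⟩

lemma IsQBoson.skewCommute_weightOp {P e : ι → Module.End KK (Um A)} (h : IsQBoson A 1 P e)
    {w : ι → ℤ} (hP : ∀ j, SkewCommute (qZ (-w j)) (Um.weightOp (A := A) 0 w).val (P j)) (n : ℤ)
    (i : ι) : SkewCommute (qZ (w i)) (Um.weightOp (A := A) n w).val (e i) := by
  have h0 := h.skewCommute_annihilate (by simp [Um.weightOp_apply, qZ_zero]) hP i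
  have hn : (Um.weightOp (A := A) n w).val = qZ n • (Um.weightOp (A := A) 0 w).val := by
    ext a
    simp [Um.weightOp_apply, qZ_zero]
  exact hn ▸ h0.smul_left (qZ n)

end Operators

section Bth

variable {ι R : Type} [DecidableEq ι] [Ring R] [Algebra KK R] {A : ι → ι → ℤ} {θ : ι → ι}

/-- The defining relations of `B_θ(g)` for elements of an arbitrary algebra `R`, the inverses of the
`T i` being recorded by taking them in `Rˣ`. -/
structure BthRelations (A : ι → ι → ℤ) (θ : ι → ι) (T : ι → Rˣ) (E F : ι → R) : Prop where
  commute_T : ∀ i j, Commute (T i) (T j)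
  T_theta : ∀ i, T (θ i) = T i
  skewCommute_T_E : ∀ i j, SkewCommute (qZ (A i j + A (θ i) j)) (T i).val (E j)
  skewCommute_T_F : ∀ i j, SkewCommute (qZ (-(A i j + A (θ i) j))) (T i).val (F j)
  E_mul_F : ∀ i j, E i * F j =
    qZ (-A i j) • (F j * E i) + (if i = j then 1 else 0) + (if θ i = j then (T i).val else 0)
  serreElt_E : ∀ i j, i ≠ j → serreElt A E i j = 0
  serreElt_F : ∀ i j, i ≠ j → serreElt A F i j = 0

namespace BthRelations

variable {T : ι → Rˣ} {E F : ι → R}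

/-- The universal property of `B_θ(g)`. -/
def lift (h : BthRelations A θ T E F) : Bth A θ →ₐ[KK] R :=
  RingQuot.liftAlgHom KK ⟨FreeAlgebra.lift KK fun
      | .E i => E i
      | .F i => F i
      | .T i => (T i).val
      | .Ti i => (T i)⁻¹.val, by
    rintro _ _ (i | i | ⟨i, j⟩ | i | i | ⟨i, j⟩ | ⟨i, j⟩ | ⟨i, j⟩ | ⟨i, j, hij⟩ | ⟨i, j, hij⟩)
    all_goals simp only [← serreElt_map, bE, bF, bT, bTi, map_add, map_mul, map_smul, map_one,
      map_zero, FreeAlgebra.lift_ι_apply, apply_ite (FreeAlgebra.lift KK _)]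
    · exact (T i).mul_inv
    · exact (T i).inv_mul
    · exact (h.commute_T i j).units_val
    · rw [h.T_theta]
    · rw [h.T_theta]
    · exact h.skewCommute_T_E i j
    · exact h.skewCommute_T_F i j
    · exact h.E_mul_F i j
    · exact h.serreElt_E i j hij
    · exact h.serreElt_F i j hij⟩

lemma lift_Eg (h : BthRelations A θ T E F) (i : ι) : h.lift (Eg A θ i) = E i := by
  rw [lift, Eg, RingQuot.liftAlgHom_mkAlgHom_apply, bE, FreeAlgebra.lift_ι_apply]

lemma lift_Fg (h : BthRelations A θ T E F) (i : ι) : h.lift (Fg A θ i) = F i := by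
  rw [lift, Fg, RingQuot.liftAlgHom_mkAlgHom_apply, bF, FreeAlgebra.lift_ι_apply]

lemma lift_Tg (h : BthRelations A θ T E F) (i : ι) : h.lift (Tg A θ i) = T i := by
  rw [lift, Tg, RingQuot.liftAlgHom_mkAlgHom_apply, bT, FreeAlgebra.lift_ι_apply]

end BthRelations

end Bth

section Modules

variable {ι : Type} {A : ι → ι → ℤ} {θ : ι → ι} {lam : ι → ℤ}

open Um

lemma IsTheta.swap (hθ : IsTheta A θ) (i j : ι) : A (θ i) j = A i (θ j) := by
  rw [← hθ.2, hθ.1]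

variable (A θ lam) in
/-- The operator by which `T_i` acts on both modules. -/
def bthT (i : ι) : (Module.End KK (Um A))ˣ := weightOp (lam i) (A i + A (θ i))

variable (θ lam) in
/-- The operator by which `E_i` acts on `U_q^-(g) φ'_λ`. -/
def primeE (E Es : ι → Module.End KK (Um A)) (i : ι) : Module.End KK (Um A) :=
  (weightOp (lam i) (A i)).val * Es (θ i) + E i

variable (A θ lam) in
/-- The operator by which `F_i` acts on `U_q^-(g) φ''_λ`. -/
def doublePrimeF (i : ι) : Module.End KK (Um A) :=
  fLeft i + fRight (θ i) * (weightOp (lam i) (A i)).val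

lemma bthT_theta (hθ : IsTheta A θ) (hlam : ∀ i, lam (θ i) = lam i) (i : ι) :
    bthT A θ lam (θ i) = bthT A θ lam i := by
  rw [bthT, bthT, hlam, hθ.1, add_comm]

lemma weightOp_mul_weightOp_theta (i : ι) :
    weightOp (A := A) (lam i) (A i) * weightOp 0 (A (θ i)) = bthT A θ lam i := by
  rw [weightOp_mul, add_zero, bthT]

lemma serreElt_doublePrimeF (hA : IsCartan A) (hθ : IsTheta A θ) {i j : ι} (hij : i ≠ j) :
    serreElt A (doublePrimeF A θ lam) i j = 0 := by
  have hK (a b) := skewCommute_weightOp_fRight (A := A) (lam a) (A a) (θ b)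
  have hfRight : serreElt A (fun k => qZ (A k (θ k)) • fRight (A := A) (θ k)) i j = 0 := by
    rw [serreElt_smul, serreElt_comp hθ.2,
      serreElt_fRight ((Function.LeftInverse.injective hθ.1).ne hij), smul_zero]
  have hswap (k) : fRight (A := A) (θ k) * (weightOp (lam k) (A k)).val =
      (weightOp (A := A) (lam k) (A k)).val * (qZ (A k (θ k)) • fRight (θ k)) := by
    rw [mul_smul_comm]
    exact neg_neg (A k (θ k)) ▸ (hK k k).qZ_symm
  have twisted : serreElt A (fun k => fRight (A := A) (θ k) * (weightOp (lam k) (A k)).val) i j =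
      0 := by
    simp only [hswap]
    exact hA.serreElt_mul_eq_zero hij (u := fun a b => qZ (A b (θ a)))
      (fun a b => by rw [hA.1, hθ.swap])
      (fun a b => by simpa using (hK b a).qZ_symm.smul_left _)
      (fun a b => (commute_weightOp _ _ _ _).units_val) hfRight
  have cross (a b) :
      SkewCommute (qZ (-A a b)) (fRight (A := A) (θ a) * (weightOp (lam a) (A a)).val)
        (fLeft b) := by
    simpa using (SkewCommute.of_commute (k := KK) (commute_fLeft_fRight b (θ a)).symm).mul_left
      (skewCommute_weightOp_fLeft (lam a) (A a) b)
  have := hA.serreElt_add hij cross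
  rwa [twisted, serreElt_fLeft hij, add_zero] at this

lemma skewCommute_bthT_doublePrimeF (hθ : IsTheta A θ) (i j : ι) :
    SkewCommute (qZ (-(A i j + A (θ i) j))) (bthT A θ lam i).val (doublePrimeF A θ lam j) := by
  have hT := skewCommute_weightOp_fRight (A := A) (lam i) (A i + A (θ i)) (θ j)
  rw [Pi.add_apply, hθ.2, ← hθ.swap, add_comm] at hT
  have hK : SkewCommute (1 : KK) (bthT A θ lam i).val (weightOp (lam j) (A j)).val :=
    .of_commute (commute_weightOp _ _ _ _).units_val
  exact (skewCommute_weightOp_fLeft _ _ _).add_right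
    (mul_one (qZ (-(A i j + A (θ i) j))) ▸ hT.mul_right hK)

variable [DecidableEq ι] {E Es : ι → Module.End KK (Um A)}

lemma skewCommute_weightOp_annihilate_left (hE : IsQBoson A 1 fLeft E) (n : ℤ) (w : ι → ℤ)
    (i : ι) : SkewCommute (qZ (w i)) (weightOp (A := A) n w).val (E i) :=
  hE.skewCommute_weightOp (skewCommute_weightOp_fLeft 0 w) n i

lemma skewCommute_weightOp_annihilate_right (hEs : IsQBoson A 1 fRight Es) (n : ℤ) (w : ι → ℤ)
    (i : ι) : SkewCommute (qZ (w i)) (weightOp (A := A) n w).val (Es i) :=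
  hEs.skewCommute_weightOp (skewCommute_weightOp_fRight 0 w) n i

lemma annihilate_left_mul_fRight (hE : IsQBoson A 1 fLeft E) (i j : ι) :
    E i * fRight j =
      fRight j * E i + (if i = j then (1 : KK) else 0) • (weightOp (A := A) 0 (A i)).val :=
  hE.annihilate_mul_create commute_fLeft_fRight (fun j => by simp [fLeft_apply, fRight_apply])
    (by simp [weightOp_apply, qZ_zero]) (skewCommute_weightOp_fLeft 0 (A i)) j

lemma annihilate_right_mul_fLeft (hEs : IsQBoson A 1 fRight Es) (i j : ι) :
    Es i * fLeft j =
      fLeft j * Es i + (if i = j then (1 : KK) else 0) • (weightOp (A := A) 0 (A i)).val :=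
  hEs.annihilate_mul_create (fun i j => (commute_fLeft_fRight j i).symm)
    (fun j => by simp [fLeft_apply, fRight_apply]) (by simp [weightOp_apply, qZ_zero])
    (skewCommute_weightOp_fRight 0 (A i)) j

lemma commute_annihilate_left_right (hA : ∀ i j, A i j = A j i) (hE : IsQBoson A 1 fLeft E)
    (hEs : IsQBoson A 1 fRight Es) (i j : ι) : Commute (E i) (Es j) :=
  hE.commute_annihilate hEs hA commute_fLeft_fRight
    (fun j => by simp [fLeft_apply, fRight_apply]) (by simp [weightOp_apply, qZ_zero])
    (skewCommute_weightOp_fLeft 0 (A i)) (skewCommute_weightOp_fRight 0 (A i)) j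

lemma serreElt_primeE (hA : IsCartan A) (hθ : IsTheta A θ) (hE : IsQBoson A 1 fLeft E)
    (hEs : IsQBoson A 1 fRight Es) {i j : ι} (hij : i ≠ j) :
    serreElt A (primeE θ lam E Es) i j = 0 := by
  have hEsθ : serreElt A (fun k => Es (θ k)) i j = 0 := by
    rw [serreElt_comp hθ.2, hEs.serreElt_eq_zero hA ((Function.LeftInverse.injective hθ.1).ne hij)]
  have twisted : serreElt A (fun k => (weightOp (lam k) (A k)).val * Es (θ k)) i j = 0 :=
    hA.serreElt_mul_eq_zero hij (u := fun a b => qZ (-A b (θ a)))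
      (fun a b => by rw [hA.1, hθ.swap])
      (fun a b => (skewCommute_weightOp_annihilate_right hEs _ _ _).qZ_symm)
      (fun a b => (commute_weightOp _ _ _ _).units_val) hEsθ
  have cross (a b) : SkewCommute (qZ (-A a b)) (E a) ((weightOp (lam b) (A b)).val * Es (θ b)) := by
    have hK := (skewCommute_weightOp_annihilate_left hE (lam b) (A b) a).qZ_symm
    simpa [hA.1 b a] using
      hK.mul_right (.of_commute (commute_annihilate_left_right hA.1 hE hEs a (θ b)))
  have := hA.serreElt_add hij cross
  rwa [twisted, hE.serreElt_eq_zero hA hij, add_zero] at this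

lemma IsQBoson.annihilate_mul_fLeft (hE : IsQBoson A 1 fLeft E) (i j : ι) :
    E i * fLeft j = qZ (-A i j) • (fLeft j * E i) + (if i = j then 1 else 0) := by
  ext a
  rw [Module.End.mul_apply, hE.annihilate_create, add_comm]
  split_ifs <;> rfl

lemma primeE_mul_fLeft (hE : IsQBoson A 1 fLeft E) (hEs : IsQBoson A 1 fRight Es) (i j : ι) :
    primeE θ lam E Es i * fLeft j =
      qZ (-A i j) • (fLeft j * primeE θ lam E Es i) + (if i = j then 1 else 0) +
        (if θ i = j then (bthT A θ lam i).val else 0) := by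
  have hK : (weightOp (A := A) (lam i) (A i)).val * fLeft j =
      qZ (-A i j) • (fLeft j * (weightOp (lam i) (A i)).val) := skewCommute_weightOp_fLeft _ _ _
  have right : (weightOp (lam i) (A i)).val * Es (θ i) * fLeft j =
      qZ (-A i j) • (fLeft j * ((weightOp (lam i) (A i)).val * Es (θ i))) +
        (if θ i = j then (bthT A θ lam i).val else 0) := by
    rw [mul_assoc, annihilate_right_mul_fLeft hEs, mul_add, ← mul_assoc, hK, smul_mul_assoc,
      mul_assoc, ite_smul, one_smul, zero_smul, mul_ite, mul_zero, ← Units.val_mul,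
      weightOp_mul_weightOp_theta]
  rw [primeE, add_mul, right, hE.annihilate_mul_fLeft, mul_add, smul_add]
  abel

lemma annihilate_mul_doublePrimeF (hA : ∀ i j, A i j = A j i) (hθ : IsTheta A θ)
    (hlam : ∀ i, lam (θ i) = lam i) (hE : IsQBoson A 1 fLeft E) (i j : ι) :
    E i * doublePrimeF A θ lam j =
      qZ (-A i j) • (doublePrimeF A θ lam j * E i) + (if i = j then 1 else 0) +
        (if θ i = j then (bthT A θ lam i).val else 0) := by
  have hK : E i * (weightOp (lam j) (A j)).val =
      qZ (-A i j) • ((weightOp (lam j) (A j)).val * E i) :=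
    hA i j ▸ (skewCommute_weightOp_annihilate_left hE (lam j) (A j) i).qZ_symm
  have hT : (if i = θ j then (1 : KK) else 0) •
      ((weightOp (A := A) 0 (A i)).val * (weightOp (lam j) (A j)).val) =
        if θ i = j then (bthT A θ lam i).val else 0 := by
    rcases eq_or_ne (θ i) j with rfl | hij
    · rw [hθ.1, if_pos rfl, if_pos rfl, one_smul, ← Units.val_mul, weightOp_mul, zero_add, hlam,
        bthT]
    · rw [if_neg hij, if_neg fun h => hij (by rw [h, hθ.1]), zero_smul]
  have right : E i * (fRight (θ j) * (weightOp (lam j) (A j)).val) =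
      qZ (-A i j) • (fRight (θ j) * (weightOp (lam j) (A j)).val * E i) +
        (if θ i = j then (bthT A θ lam i).val else 0) := by
    rw [← mul_assoc, annihilate_left_mul_fRight hE, add_mul, mul_assoc, hK, mul_smul_comm,
      mul_assoc, smul_mul_assoc, hT]
  rw [doublePrimeF, mul_add, right, hE.annihilate_mul_fLeft, add_mul, smul_add]
  abel

lemma skewCommute_bthT_primeE (hθ : IsTheta A θ) (hE : IsQBoson A 1 fLeft E)
    (hEs : IsQBoson A 1 fRight Es) (i j : ι) :
    SkewCommute (qZ (A i j + A (θ i) j)) (bthT A θ lam i).val (primeE θ lam E Es j) := by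
  have hT := skewCommute_weightOp_annihilate_right hEs (lam i) (A i + A (θ i)) (θ j)
  rw [Pi.add_apply, hθ.2, ← hθ.swap, add_comm] at hT
  have hK : SkewCommute (1 : KK) (bthT A θ lam i).val (weightOp (lam j) (A j)).val :=
    .of_commute (commute_weightOp _ _ _ _).units_val
  exact (one_mul (qZ (A i j + A (θ i) j)) ▸ hK.mul_right hT).add_right
    (skewCommute_weightOp_annihilate_left hE _ _ _)

lemma bthRelations_prime (hA : IsCartan A) (hθ : IsTheta A θ) (hlam : ∀ i, lam (θ i) = lam i)
    (hE : IsQBoson A 1 fLeft E) (hEs : IsQBoson A 1 fRight Es) :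
    BthRelations A θ (bthT A θ lam) (primeE θ lam E Es) fLeft where
  commute_T _ _ := commute_weightOp _ _ _ _
  T_theta := bthT_theta hθ hlam
  skewCommute_T_E := skewCommute_bthT_primeE hθ hE hEs
  skewCommute_T_F _ _ := skewCommute_weightOp_fLeft _ _ _
  E_mul_F := primeE_mul_fLeft hE hEs
  serreElt_E _ _ := serreElt_primeE hA hθ hE hEs
  serreElt_F _ _ := serreElt_fLeft

lemma bthRelations_doublePrime (hA : IsCartan A) (hθ : IsTheta A θ)
    (hlam : ∀ i, lam (θ i) = lam i) (hE : IsQBoson A 1 fLeft E) :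
    BthRelations A θ (bthT A θ lam) E (doublePrimeF A θ lam) where
  commute_T _ _ := commute_weightOp _ _ _ _
  T_theta := bthT_theta hθ hlam
  skewCommute_T_E _ _ := skewCommute_weightOp_annihilate_left hE _ _ _
  skewCommute_T_F := skewCommute_bthT_doublePrimeF hθ
  E_mul_F := annihilate_mul_doublePrimeF hA.1 hθ hlam hE
  serreElt_E _ _ := hE.serreElt_eq_zero hA
  serreElt_F _ _ := serreElt_doublePrimeF hA hθ

end Modules

section Intertwiner

section Algebra

variable {R V W : Type} [Ring R] [Algebra KK R] [AddCommGroup V] [Module KK V] [AddCommGroup W]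
  [Module KK W] {ρ : R →ₐ[KK] Module.End KK V} {σ : R →ₐ[KK] Module.End KK W} {ψ : V →ₗ[KK] W}
  {a : V} {x y : R}

variable (ρ σ ψ) in
/-- The elements of an algebra whose action on the single vector `a` is respected by `ψ`. Unlike the
elements whose action on all vectors is respected, they are accessible to an induction on `a`. -/
def intertwinedAt (a : V) : Submodule KK R :=
  LinearMap.eqLocus (ψ ∘ₗ LinearMap.applyₗ a ∘ₗ ρ.toLinearMap)
    (LinearMap.applyₗ (ψ a) ∘ₗ σ.toLinearMap)

lemma mem_intertwinedAt : x ∈ intertwinedAt ρ σ ψ a ↔ ψ (ρ x a) = σ x (ψ a) := .rfl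

lemma one_mem_intertwinedAt : 1 ∈ intertwinedAt ρ σ ψ a := by
  simp [mem_intertwinedAt]

lemma mul_mem_intertwinedAt (hx : ∀ b, x ∈ intertwinedAt ρ σ ψ b)
    (hy : y ∈ intertwinedAt ρ σ ψ a) : x * y ∈ intertwinedAt ρ σ ψ a := by
  rw [mem_intertwinedAt] at hy ⊢
  rw [map_mul, map_mul, Module.End.mul_apply, Module.End.mul_apply, mem_intertwinedAt.mp (hx _), hy]

lemma mem_intertwinedAt_of_mul_eq_one (hx : ∀ b, x ∈ intertwinedAt ρ σ ψ b) (hxy : x * y = 1)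
    (hyx : y * x = 1) (a : V) : y ∈ intertwinedAt ρ σ ψ a := by
  have hψ : ψ a = σ x (ψ (ρ y a)) := by
    rw [← mem_intertwinedAt.mp (hx _), ← Module.End.mul_apply, ← map_mul, hxy, map_one,
      Module.End.one_apply]
  rw [mem_intertwinedAt, hψ, ← Module.End.mul_apply, ← map_mul, hyx, map_one, Module.End.one_apply]

variable (ρ σ ψ) in
/-- The elements of an algebra whose action is respected by `ψ`. -/
def intertwined : Subalgebra KK R where
  carrier := {x | ∀ a, x ∈ intertwinedAt ρ σ ψ a}
  mul_mem' hx hy a := mul_mem_intertwinedAt hx (hy a)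
  add_mem' hx hy a := add_mem (hx a) (hy a)
  algebraMap_mem' c a := by
    rw [Algebra.algebraMap_eq_smul_one]
    exact Submodule.smul_mem _ c one_mem_intertwinedAt

end Algebra

namespace Bth

section Relations

variable {ι : Type} [DecidableEq ι] {A : ι → ι → ℤ} {θ : ι → ι}

lemma Tg_mul_Tig (i : ι) : Tg A θ i * Tig A θ i = 1 := by
  simpa only [Tg, Tig, map_mul, map_one] using
    RingQuot.mkAlgHom_rel KK (BRel.T_inv_right (A := A) (θ := θ) i)

lemma Tig_mul_Tg (i : ι) : Tig A θ i * Tg A θ i = 1 := by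
  simpa only [Tg, Tig, map_mul, map_one] using
    RingQuot.mkAlgHom_rel KK (BRel.T_inv_left (A := A) (θ := θ) i)

lemma Tg_mul_Fg (i j : ι) :
    Tg A θ i * Fg A θ j = qZ (-(A i j + A (θ i) j)) • (Fg A θ j * Tg A θ i) := by
  simpa only [Tg, Fg, map_mul, map_smul] using
    RingQuot.mkAlgHom_rel KK (BRel.TF (A := A) (θ := θ) i j)

lemma Eg_mul_Fg (i j : ι) : Eg A θ i * Fg A θ j =
    qZ (-A i j) • (Fg A θ j * Eg A θ i) + (if i = j then 1 else 0) +
      (if θ i = j then Tg A θ i else 0) := by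
  simpa only [Eg, Fg, Tg, map_mul, map_smul, map_add, map_one, map_zero,
    apply_ite (RingQuot.mkAlgHom KK (BRel A θ))]
    using RingQuot.mkAlgHom_rel KK (BRel.EF (A := A) (θ := θ) i j)

lemma serreElt_Fg {i j : ι} (hij : i ≠ j) : serreElt A (Fg A θ) i j = 0 := by
  have := RingQuot.mkAlgHom_rel KK (BRel.Fserre (A := A) (θ := θ) i j hij)
  rwa [map_zero, ← serreElt_map] at this

end Relations

variable {ι V : Type} [DecidableEq ι] {A : ι → ι → ℤ} {θ : ι → ι} [AddCommGroup V] [Module KK V]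
  {ρ : Bth A θ →ₐ[KK] Module.End KK (Um A)} {σ : Bth A θ →ₐ[KK] Module.End KK V}
  {ψ : Um A →ₗ[KK] V}

lemma mem_intertwinedAt_of_mul_Fg_mem {x : Bth A θ} (hF : ∀ i a, ρ (Fg A θ i) a = fgen A i * a)
    (hψF : ∀ i a, Fg A θ i ∈ intertwinedAt ρ σ ψ a) (h1 : x ∈ intertwinedAt ρ σ ψ 1)
    (hx : ∀ j a, x ∈ intertwinedAt ρ σ ψ a → x * Fg A θ j ∈ intertwinedAt ρ σ ψ a) (a : Um A) :
    x ∈ intertwinedAt ρ σ ψ a := by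
  suffices LinearMap.eqLocus (ψ ∘ₗ ρ x) (σ x ∘ₗ ψ) = ⊤ from
    LinearMap.congr_fun (LinearMap.eqLocus_eq_top.mp this) a
  refine Um.submodule_eq_top_of_fgen_mul_mem h1 fun j b hb => ?_
  have := mem_intertwinedAt.mp (hx j b hb)
  rwa [map_mul, map_mul, Module.End.mul_apply, Module.End.mul_apply, hF,
    ← mem_intertwinedAt.mp (hψF j b), hF] at this

lemma intertwined_eq_top (hF : ∀ i a, ρ (Fg A θ i) a = fgen A i * a)
    (hψF : ∀ i a, Fg A θ i ∈ intertwinedAt ρ σ ψ a)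
    (hE : ∀ i, Eg A θ i ∈ intertwinedAt ρ σ ψ 1) (hT : ∀ i, Tg A θ i ∈ intertwinedAt ρ σ ψ 1) :
    intertwined ρ σ ψ = ⊤ := by
  have hψT (i) : Tg A θ i ∈ intertwined ρ σ ψ :=
    mem_intertwinedAt_of_mul_Fg_mem hF hψF (hT i) fun j a ha => by
      rw [Tg_mul_Fg]
      exact Submodule.smul_mem _ _ (mul_mem_intertwinedAt (hψF j) ha)
  have hψE (i) : Eg A θ i ∈ intertwined ρ σ ψ :=
    mem_intertwinedAt_of_mul_Fg_mem hF hψF (hE i) fun j a ha => by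
      rw [Eg_mul_Fg]
      refine add_mem (add_mem
        (Submodule.smul_mem _ _ (mul_mem_intertwinedAt (hψF j) ha)) ?_) ?_
      · split_ifs
        exacts [one_mem_intertwinedAt, zero_mem _]
      · split_ifs
        exacts [hψT i a, zero_mem _]
  refine subalgebra_eq_top_of_mkAlgHom_ι_mem ?_
  rintro (i | i | i | i)
  exacts [hψE i, hψF i, hψT i,
    mem_intertwinedAt_of_mul_eq_one (hψT i) (Tg_mul_Tig i) (Tig_mul_Tg i)]

theorem existsUnique_intertwiner {v : V} {c : ι → KK}
    (hF : ∀ i a, ρ (Fg A θ i) a = fgen A i * a)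
    (hE : ∀ i, ρ (Eg A θ i) 1 = 0) (hT : ∀ i, ρ (Tg A θ i) 1 = c i • 1)
    (hEv : ∀ i, σ (Eg A θ i) v = 0) (hTv : ∀ i, σ (Tg A θ i) v = c i • v) :
    ∃! ψ : Um A →ₗ[KK] V, ψ 1 = v ∧ ∀ (x : Bth A θ) (a : Um A), ψ (ρ x a) = σ x (ψ a) := by
  have serre (i j : ι) (hij : i ≠ j) : serreElt A (fun i => σ (Fg A θ i)) i j = 0 := by
    rw [serreElt_map, serreElt_Fg hij, map_zero]
  let ψ : Um A →ₗ[KK] V := LinearMap.applyₗ v ∘ₗ (Um.lift _ serre).toLinearMap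
  have hψ_one : ψ 1 = v := by simp [ψ]
  have hψF (i : ι) (a : Um A) : Fg A θ i ∈ intertwinedAt ρ σ ψ a := by
    simp [mem_intertwinedAt, hF, ψ, Um.lift_fgen]
  have htop : intertwined ρ σ ψ = ⊤ := intertwined_eq_top hF hψF
    (fun i => by rw [mem_intertwinedAt, hE, map_zero, hψ_one, hEv])
    (fun i => by rw [mem_intertwinedAt, hT, map_smul, hψ_one, hTv])
  have hψ (x : Bth A θ) (a : Um A) : ψ (ρ x a) = σ x (ψ a) := Algebra.eq_top_iff.mp htop x a
  refine ⟨ψ, ⟨hψ_one, hψ⟩, fun ψ' ⟨hψ'_one, hψ'⟩ => ?_⟩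
  refine LinearMap.eqLocus_eq_top.mp (Um.submodule_eq_top_of_fgen_mul_mem ?_ fun i a ha => ?_)
  · exact hψ'_one.trans hψ_one.symm
  · rw [LinearMap.mem_eqLocus] at ha ⊢
    rw [← hF, hψ', hψ, ha]

end Bth

end Intertwiner

section Main

variable {ι : Type} {A : ι → ι → ℤ} {θ : ι → ι} [DecidableEq ι] {lam : ι → ℤ}
  {E Es Adt Adtt : ι → Module.End KK (Um A)} {ρ σ : Bth A θ →ₐ[KK] Module.End KK (Um A)}

/-- `ρ` is given on the generators by the formulas for `U_q^-(g) φ'_λ`, where `Adt i` and `Adtt i`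
stand for `Ad(t_i)` and `Ad(t_i t_{θ(i)})`. -/
def IsPrimeRep (lam : ι → ℤ) (E Es Adt Adtt : ι → Module.End KK (Um A))
    (ρ : Bth A θ →ₐ[KK] Module.End KK (Um A)) : Prop :=
  (∀ i (a : Um A), ρ (Tg A θ i) a = qZ (lam i) • Adtt i a) ∧
  (∀ i (a : Um A), ρ (Eg A θ i) a = E i a + qZ (lam i) • Adt i (Es (θ i) a)) ∧
  ∀ i (a : Um A), ρ (Fg A θ i) a = fgen A i * a

/-- `ρ` is given on the generators by the formulas for `U_q^-(g) φ''_λ`, where `Adt i` and `Adtt i`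
stand for `Ad(t_i)` and `Ad(t_i t_{θ(i)})`. -/
def IsDoublePrimeRep (lam : ι → ℤ) (E Adt Adtt : ι → Module.End KK (Um A))
    (ρ : Bth A θ →ₐ[KK] Module.End KK (Um A)) : Prop :=
  (∀ i (a : Um A), ρ (Tg A θ i) a = qZ (lam i) • Adtt i a) ∧
  (∀ i (a : Um A), ρ (Eg A θ i) a = E i a) ∧
  ∀ i (a : Um A), ρ (Fg A θ i) a = fgen A i * a + qZ (lam i) • (Adt i a * fgen A (θ i))

lemma exists_isPrimeRep (hA : IsCartan A) (hθ : IsTheta A θ) (hlam : ∀ i, lam (θ i) = lam i)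
    (hE : EprimRel A E) (hEs : EstarRel A Es) (hAdt : ∀ i, IsAd A (A i) (Adt i))
    (hAdtt : ∀ i, IsAd A (fun j => A i j + A (θ i) j) (Adtt i)) :
    ∃ ρ : Bth A θ →ₐ[KK] Module.End KK (Um A), IsPrimeRep lam E Es Adt Adtt ρ := by
  have h := bthRelations_prime hA hθ hlam hE.isQBoson hEs.isQBoson
  refine ⟨h.lift, fun i a => ?_, fun i a => ?_, fun i a => ?_⟩
  · rw [h.lift_Tg, bthT, Um.weightOp_apply, (hAdtt i).eq_ad]
    rfl
  · rw [h.lift_Eg, primeE, LinearMap.add_apply, Module.End.mul_apply, Um.weightOp_apply,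
      (hAdt i).eq_ad, add_comm]
  · rw [h.lift_Fg, Um.fLeft_apply]

lemma exists_isDoublePrimeRep (hA : IsCartan A) (hθ : IsTheta A θ)
    (hlam : ∀ i, lam (θ i) = lam i) (hE : EprimRel A E) (hAdt : ∀ i, IsAd A (A i) (Adt i))
    (hAdtt : ∀ i, IsAd A (fun j => A i j + A (θ i) j) (Adtt i)) :
    ∃ ρ : Bth A θ →ₐ[KK] Module.End KK (Um A), IsDoublePrimeRep lam E Adt Adtt ρ := by
  have h := bthRelations_doublePrime hA hθ hlam hE.isQBoson
  refine ⟨h.lift, fun i a => ?_, fun i a => ?_, fun i a => ?_⟩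
  · rw [h.lift_Tg, bthT, Um.weightOp_apply, (hAdtt i).eq_ad]
    rfl
  · rw [h.lift_Eg]
  · rw [h.lift_Fg, doublePrimeF, LinearMap.add_apply, Module.End.mul_apply, Um.weightOp_apply,
      (hAdt i).eq_ad, Um.fLeft_apply, Um.fRight_apply, smul_mul_assoc]

lemma IsPrimeRep.existsUnique_intertwiner (hρ : IsPrimeRep lam E Es Adt Adtt ρ)
    (hσ : IsDoublePrimeRep lam E Adt Adtt σ) (hE : ∀ i, E i 1 = 0) (hEs : ∀ i, Es i 1 = 0)
    (hAdtt : ∀ i, Adtt i 1 = 1) : ∃! ψ : Um A →ₗ[KK] Um A,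
      ψ 1 = 1 ∧ ∀ (x : Bth A θ) (a : Um A), ψ (ρ x a) = σ x (ψ a) := by
  obtain ⟨hρT, hρE, hρF⟩ := hρ
  obtain ⟨hσT, hσE, -⟩ := hσ
  exact Bth.existsUnique_intertwiner (c := fun i => qZ (lam i)) hρF
    (fun i => by rw [hρE, hE, hEs, map_zero, smul_zero, add_zero])
    (fun i => by rw [hρT, hAdtt])
    (fun i => by rw [hσE, hE])
    (fun i => by rw [hσT, hAdtt])

theorem stmt8_general (hA : IsCartan A) (hθ : IsTheta A θ) (hlam : ∀ i, lam (θ i) = lam i)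
    (hE : EprimRel A E) (hEs : EstarRel A Es) (hAdt : ∀ i, IsAd A (A i) (Adt i))
    (hAdtt : ∀ i, IsAd A (fun j => A i j + A (θ i) j) (Adtt i)) :
    (∃ ρ : Bth A θ →ₐ[KK] Module.End KK (Um A), IsPrimeRep lam E Es Adt Adtt ρ) ∧
    (∃ σ : Bth A θ →ₐ[KK] Module.End KK (Um A), IsDoublePrimeRep lam E Adt Adtt σ) ∧
    ∀ ρ σ : Bth A θ →ₐ[KK] Module.End KK (Um A),
      IsPrimeRep lam E Es Adt Adtt ρ → IsDoublePrimeRep lam E Adt Adtt σ →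
      ∃! ψ : Um A →ₗ[KK] Um A,
        ψ 1 = 1 ∧ ∀ (x : Bth A θ) (a : Um A), ψ (ρ x a) = σ x (ψ a) :=
  ⟨exists_isPrimeRep hA hθ hlam hE hEs hAdt hAdtt,
    exists_isDoublePrimeRep hA hθ hlam hE hAdt hAdtt,
    fun _ _ hρ hσ => hρ.existsUnique_intertwiner hσ hE.1 hEs.1 fun i => by
      rw [(hAdtt i).eq_ad, map_one]⟩

end Main

set_option synthInstance.maxHeartbeats 1000000 in
set_option maxHeartbeats 1000000 in
theorem stmt8 (A : I → I → ℤ) (θ : I → I) (hA : IsCartan A) (hθ : IsTheta A θ)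
    (lam : I → ℤ) (hlam : IsDomWt A θ lam)
    (E : I → Module.End KK (Um A)) (hE : EprimRel A E)
    (Es : I → Module.End KK (Um A)) (hEs : EstarRel A Es)
    (Adt : I → Module.End KK (Um A)) (hAdt : ∀ i, IsAd A (A i) (Adt i))
    (Adtt : I → Module.End KK (Um A))
    (hAdtt : ∀ i, IsAd A (fun j => A i j + A (θ i) j) (Adtt i)) :
    -- the `B_θ(g)`-module structure on `U_q^-(g) φ'_λ`
    (∃ ρ' : Bth A θ →ₐ[KK] Module.End KK (Um A),
      (∀ i (a : Um A), ρ' (Tg A θ i) a = qZ (lam i) • Adtt i a) ∧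
      (∀ i (a : Um A), ρ' (Eg A θ i) a = E i a + qZ (lam i) • Adt i (Es (θ i) a)) ∧
      (∀ i (a : Um A), ρ' (Fg A θ i) a = fgen A i * a)) ∧
    -- the `B_θ(g)`-module structure on `U_q^-(g) φ''_λ`
    (∃ ρ'' : Bth A θ →ₐ[KK] Module.End KK (Um A),
      (∀ i (a : Um A), ρ'' (Tg A θ i) a = qZ (lam i) • Adtt i a) ∧
      (∀ i (a : Um A), ρ'' (Eg A θ i) a = E i a) ∧
      (∀ i (a : Um A), ρ'' (Fg A θ i) a
          = fgen A i * a + qZ (lam i) • (Adt i a * fgen A (θ i)))) ∧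
    -- the unique `B_θ(g)`-linear map `ψ : U_q^-(g)φ'_λ → U_q^-(g)φ''_λ`, `φ'_λ ↦ φ''_λ`
    (∀ (ρ' ρ'' : Bth A θ →ₐ[KK] Module.End KK (Um A)),
      (∀ i (a : Um A), ρ' (Tg A θ i) a = qZ (lam i) • Adtt i a) →
      (∀ i (a : Um A), ρ' (Eg A θ i) a = E i a + qZ (lam i) • Adt i (Es (θ i) a)) →
      (∀ i (a : Um A), ρ' (Fg A θ i) a = fgen A i * a) →
      (∀ i (a : Um A), ρ'' (Tg A θ i) a = qZ (lam i) • Adtt i a) →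
      (∀ i (a : Um A), ρ'' (Eg A θ i) a = E i a) →
      (∀ i (a : Um A), ρ'' (Fg A θ i) a
          = fgen A i * a + qZ (lam i) • (Adt i a * fgen A (θ i))) →
      ∃! ψ : Um A →ₗ[KK] Um A,
        ψ 1 = 1 ∧ ∀ (x : Bth A θ) (a : Um A), ψ (ρ' x a) = ρ'' x (ψ a)) := by
  have ⟨hprime, hdoublePrime, hψ⟩ := stmt8_general hA hθ hlam.2.2 hE hEs hAdt hAdtt
  exact ⟨hprime, hdoublePrime, fun ρ' ρ'' hT hE hF hT' hE' hF' =>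
    hψ ρ' ρ'' ⟨hT, hE, hF⟩ ⟨hT', hE', hF'⟩⟩
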